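/- (Spanning by noncrossing symbols.) Let V = ℂ². For an m-partite pair partition π of [md], define the function ω̃_π : (V*)^m → ℂ by ω̃_π(y₁, ..., y_m) = Π_{{i,j} ∈ π, i<j} [y_{c(i)}, y_{c(j)}], where c(i) ∈ {1,...,m} is the index of the interval of length d containing i, and [·,·] is the determinant bracket on V* ≅ ℂ². Then for every m-partite pair partition π of [md], the function ω̃_π lies in the linear span of { ω̃_σ : σ an m-partite noncrossing pair partition of [md] }. -/

import Mathlib

/-!
A crossing consists of points `a < b < c < e` with blocks `{a, c}` and `{b, e}`. The Plücker
relation writes the symbol of the pairing as the sum of the symbols obtained by reconnecting these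
blocks to `{a, b}, {c, e}` and to `{a, e}, {b, c}`. Giving a block `{i < j}` of `{0, ..., N - 1}`
the weight `j (N + i)`, the total weight drops by `(c - b) (N + a - e) > 0` in the first case and
by `(b - a) (e - c) > 0` in the second, so finitely many such steps lead to noncrossing pairings.
The reconnected pairings need not be `m`-partite, but a pairing that is not has symbol zero because
of a factor `[v, v]`.
-/

/-- The bracket `[v, w]` of two vectors in `ℂ²`: the determinant of the `2 × 2`
matrix with columns `v` and `w`. -/
def bracket (v w : Fin 2 → ℂ) : ℂ := v 0 * w 1 - v 1 * w 0

/-- The index `c(i) ∈ {1, ..., m}` (0-indexed) of the length-`d` interval containing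
`i ∈ {1, ..., md}` (0-indexed, so `c(i) = i / d`). -/
def intervalIdx (m d : ℕ) (i : Fin (m * d)) : Fin m :=
  ⟨(i : ℕ) / d, by
    rcases Nat.eq_zero_or_pos d with h | h
    · subst h; exact absurd i.2 (by simp)
    · exact (Nat.div_lt_iff_lt_mul h).mpr i.2⟩

/-- A pair partition of `{1, ..., N}`, encoded as a fixed-point-free involution: the
blocks are the pairs `{i, σ i}`. -/
def IsPairing {N : ℕ} (σ : Equiv.Perm (Fin N)) : Prop :=
  σ * σ = 1 ∧ ∀ i, σ i ≠ i

/-- The pair partition encoded by `σ` is noncrossing: there are no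
`i < i' < j < j'` with `{i, j}` and `{i', j'}` blocks. -/
def PairingNoncrossing {N : ℕ} (σ : Equiv.Perm (Fin N)) : Prop :=
  ∀ i i' : Fin N, i < i' → i' < σ i → ¬ (σ i < σ i')

/-- The pair partition encoded by `σ` is `m`-partite with respect to the consecutive
intervals of length `d`: each block contains at most one element of each interval,
i.e. the two elements of any pair lie in different intervals. -/
def PairingMPartite (m d : ℕ) (σ : Equiv.Perm (Fin (m * d))) : Prop :=
  ∀ i, intervalIdx m d (σ i) ≠ intervalIdx m d i

/-- The symbol `ω̃_π : (V*)^m → ℂ` of the pair partition `π` (encoded by the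
involution `σ`): `ω̃_π(y₁, ..., y_m) = Π_{{i,j} ∈ π, i<j} [y_{c(i)}, y_{c(j)}]`. -/
noncomputable def symbolFun (m d : ℕ) (σ : Equiv.Perm (Fin (m * d)))
    (y : Fin m → Fin 2 → ℂ) : ℂ :=
  ∏ i ∈ Finset.univ.filter (fun i : Fin (m * d) => i < σ i),
    bracket (y (intervalIdx m d i)) (y (intervalIdx m d (σ i)))

open Equiv (Perm swap)

open Finset (prod_congr prod_mul_prod_compl)

section Pairing

variable {N : ℕ} {σ : Perm (Fin N)} {p q i : Fin N}

namespace IsPairing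

lemma apply_apply (hσ : IsPairing σ) (i : Fin N) : σ (σ i) = i :=
  Equiv.congr_fun hσ.1 i

lemma apply_eq_iff (hσ : IsPairing σ) {j : Fin N} : σ i = j ↔ i = σ j :=
  ⟨fun h ↦ by rw [← h, hσ.apply_apply], fun h ↦ by rw [h, hσ.apply_apply]⟩

end IsPairing

/-- The pairing in which distinct blocks `{p, σ p}` and `{q, σ q}` of `σ` are replaced by `{p, q}`
and `{σ p, σ q}`, encoded as the conjugate of `σ` by the transposition of `σ p` and `q`. -/
def reconnect (σ : Perm (Fin N)) (p q : Fin N) : Perm (Fin N) :=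
  swap (σ p) q * σ * swap (σ p) q

namespace IsPairing

protected lemma reconnect (hσ : IsPairing σ) (p q : Fin N) : IsPairing (reconnect σ p q) := by
  refine ⟨?_, fun i hi ↦ hσ.2 (swap (σ p) q i) ?_⟩
  · ext i
    simp [reconnect, hσ.apply_apply]
  · simpa [reconnect, Equiv.swap_apply_eq_iff] using hi

lemma reconnect_apply_left (hσ : IsPairing σ) (hpq : p ≠ q) : reconnect σ p q p = q := by
  simp [reconnect, Equiv.swap_apply_of_ne_of_ne (hσ.2 p).symm hpq]

lemma reconnect_apply_apply_left (hσ : IsPairing σ) (hpq : p ≠ q) :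
    reconnect σ p q (σ p) = σ q := by
  simp [reconnect, Equiv.swap_apply_of_ne_of_ne (σ.injective.ne hpq.symm) (hσ.2 q)]

lemma reconnect_apply_of_notMem (hσ : IsPairing σ)
    (hi : i ∉ ({p, σ p, q, σ q} : Finset (Fin N))) : reconnect σ p q i = σ i := by
  simp only [Finset.mem_insert, Finset.mem_singleton, not_or] at hi
  obtain ⟨hip, hip', hiq, hiq'⟩ := hi
  simp [reconnect, Equiv.swap_apply_of_ne_of_ne hip' hiq,
    Equiv.swap_apply_of_ne_of_ne (σ.injective.ne hip) (hσ.apply_eq_iff.not.2 hiq')]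

end IsPairing

end Pairing

section PairProd

variable {N : ℕ} {M : Type*} [CommMonoid M]

/-- The product, or in the additive version `pairSum` the sum, of `F i j` over the blocks `{i < j}`
of the pairing `σ`. The product form gives symbols, the sum form the termination measure. -/
@[to_additive]
def pairProd (F : Fin N → Fin N → M) (σ : Perm (Fin N)) : M :=
  ∏ i with i < σ i, F i (σ i)

@[to_additive]
lemma IsPairing.pairProd_eq_mul_mul_prod_compl {τ : Perm (Fin N)} (hτ : IsPairing τ)
    (F : Fin N → Fin N → M) {p p' q q' : Fin N} (hpp' : τ p = p') (hqq' : τ q = q')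
    (hp : p < p') (hq : q < q') (hpq : p ≠ q) :
    pairProd F τ = F p p' * F q q' *
      ∏ i ∈ ({p, p', q, q'} : Finset (Fin N))ᶜ, if i < τ i then F i (τ i) else 1 := by
  subst hpp' hqq'
  have hpq' : p ≠ τ q := by grind [hτ.apply_apply q]
  have hp'q : τ p ≠ q := by grind [hτ.apply_apply p]
  rw [pairProd, Finset.prod_filter, ← prod_mul_prod_compl {p, τ p, q, τ q},
    Finset.prod_insert (by simp [hp.ne, hpq, hpq']), Finset.prod_insert (by simp [hp'q, hpq]),
    Finset.prod_insert (by simp [hq.ne]), Finset.prod_singleton]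
  simp only [hτ.apply_apply, hp, hq, hp.not_gt, hq.not_gt, if_true, if_false, one_mul, mul_one]

@[to_additive]
lemma IsPairing.exists_pairProd_reconnect {σ : Perm (Fin N)} (hσ : IsPairing σ) {a b : Fin N}
    (hab : a < b) (hba' : b < σ a) (hab' : σ a < σ b) (F : Fin N → Fin N → M) :
    ∃ r, pairProd F σ = F a (σ a) * F b (σ b) * r ∧
      pairProd F (reconnect σ a b) = F a b * F (σ a) (σ b) * r ∧
      pairProd F (reconnect σ a (σ b)) = F a (σ b) * F b (σ a) * r := by
  have hinner := hσ.reconnect a b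
  have houter := hσ.reconnect a (σ b)
  have hab_ne : a ≠ σ b := (hab.trans (hba'.trans hab')).ne
  have houter_b : reconnect σ a (σ b) b = σ a := by
    rw [houter.apply_eq_iff, hσ.reconnect_apply_apply_left hab_ne, hσ.apply_apply]
  have hset₁ : ({a, b, σ a, σ b} : Finset (Fin N)) = {a, σ a, b, σ b} := by grind
  have hset₂ : ({a, σ b, b, σ a} : Finset (Fin N)) = {a, σ a, b, σ b} := by grind
  refine ⟨_, hσ.pairProd_eq_mul_mul_prod_compl F rfl rfl (hab.trans hba') (hba'.trans hab')
    hab.ne, ?_, ?_⟩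
  · rw [hinner.pairProd_eq_mul_mul_prod_compl F (hσ.reconnect_apply_left hab.ne)
      (hσ.reconnect_apply_apply_left hab.ne) hab hab' (hab.trans hba').ne, hset₁]
    congr 1
    refine prod_congr rfl fun i hi ↦ ?_
    rw [hσ.reconnect_apply_of_notMem (Finset.mem_compl.1 hi)]
  · rw [houter.pairProd_eq_mul_mul_prod_compl F (hσ.reconnect_apply_left hab_ne) houter_b
      (hab.trans (hba'.trans hab')) hba' hab.ne, hset₂]
    congr 1
    refine prod_congr rfl fun i hi ↦ ?_
    rw [hσ.reconnect_apply_of_notMem (by grind [hσ.apply_apply b, Finset.mem_compl])]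

end PairProd

section Straightening

variable {N : ℕ} {σ : Perm (Fin N)} {a b : Fin N}

/-- The termination measure for resolving crossings: a block `{i < j}` has weight `j (N + i)`. -/
def pairWeight (σ : Perm (Fin N)) : ℕ :=
  pairSum (fun i j ↦ (j : ℕ) * (N + i)) σ

lemma IsPairing.pairWeight_reconnect_lt (hσ : IsPairing σ) (hab : a < b) (hba' : b < σ a)
    (hab' : σ a < σ b) :
    pairWeight (reconnect σ a b) < pairWeight σ ∧
      pairWeight (reconnect σ a (σ b)) < pairWeight σ := by
  obtain ⟨r, hr, hinner, houter⟩ :=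
    hσ.exists_pairSum_reconnect hab hba' hab' fun i j ↦ (j : ℕ) * (N + i)
  rw [Fin.lt_def] at hab hba' hab'
  have hN : (σ b : ℕ) < N := (σ b).isLt
  have hinner_lt : (b : ℕ) * (N + a) + σ b * (N + σ a) < σ a * (N + a) + σ b * (N + b) := by
    nlinarith
  have houter_lt : (σ b : ℕ) * (N + a) + σ a * (N + b) < σ a * (N + a) + σ b * (N + b) := by
    nlinarith
  rw [pairWeight, pairWeight, pairWeight, hr, hinner, houter]
  exact ⟨Nat.add_lt_add_right hinner_lt r, Nat.add_lt_add_right houter_lt r⟩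

lemma IsPairing.pairProd_eq_add_of_pluecker {R : Type*} [CommSemiring R] {F : Fin N → Fin N → R}
    (hF : ∀ ⦃a b c e⦄, a < b → b < c → c < e → F a c * F b e = F a b * F c e + F a e * F b c)
    (hσ : IsPairing σ) (hab : a < b) (hba' : b < σ a) (hab' : σ a < σ b) :
    pairProd F σ = pairProd F (reconnect σ a b) + pairProd F (reconnect σ a (σ b)) := by
  obtain ⟨r, hr, hinner, houter⟩ := hσ.exists_pairProd_reconnect hab hba' hab' F
  rw [hr, hinner, houter, hF hab hba' hab', add_mul]

theorem IsPairing.pairProd_mem_span_noncrossing {R : Type*} [CommSemiring R]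
    {F : Fin N → Fin N → R}
    (hF : ∀ ⦃a b c e⦄, a < b → b < c → c < e → F a c * F b e = F a b * F c e + F a e * F b c)
    (hσ : IsPairing σ) :
    pairProd F σ ∈
      Submodule.span ℕ (pairProd F '' {τ | IsPairing τ ∧ PairingNoncrossing τ}) := by
  induction hw : pairWeight σ using Nat.strong_induction_on generalizing σ with
  | _ w ih =>
    by_cases hnc : PairingNoncrossing σ
    · exact Submodule.subset_span ⟨σ, ⟨hσ, hnc⟩, rfl⟩
    · simp only [PairingNoncrossing, not_forall, not_not] at hnc
      obtain ⟨a, b, hab, hba', hab'⟩ := hnc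
      obtain ⟨hinner, houter⟩ := hσ.pairWeight_reconnect_lt hab hba' hab'
      rw [hσ.pairProd_eq_add_of_pluecker hF hab hba' hab']
      exact add_mem (ih _ (hw ▸ hinner) (hσ.reconnect _ _) rfl)
        (ih _ (hw ▸ houter) (hσ.reconnect _ _) rfl)

end Straightening

section Symbol

variable {m d : ℕ} {σ : Perm (Fin (m * d))}

lemma bracket_self (v : Fin 2 → ℂ) : bracket v v = 0 := by
  unfold bracket
  ring

lemma bracket_pluecker (v₁ v₂ v₃ v₄ : Fin 2 → ℂ) :
    bracket v₁ v₃ * bracket v₂ v₄ =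
      bracket v₁ v₂ * bracket v₃ v₄ + bracket v₁ v₄ * bracket v₂ v₃ := by
  unfold bracket
  ring

/-- The factor `[y_{c(i)}, y_{c(j)}]` of a symbol, as a function of `y`. -/
def intervalBracket (m d : ℕ) (i j : Fin (m * d)) (y : Fin m → Fin 2 → ℂ) : ℂ :=
  bracket (y (intervalIdx m d i)) (y (intervalIdx m d j))

lemma intervalBracket_pluecker (i j k l : Fin (m * d)) :
    intervalBracket m d i k * intervalBracket m d j l =
      intervalBracket m d i j * intervalBracket m d k l +
        intervalBracket m d i l * intervalBracket m d j k :=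
  funext fun _ ↦ bracket_pluecker _ _ _ _

lemma symbolFun_eq_pairProd (σ : Perm (Fin (m * d))) :
    symbolFun m d σ = pairProd (intervalBracket m d) σ := by
  ext y
  simp only [symbolFun, pairProd, Finset.prod_apply, intervalBracket]

lemma IsPairing.symbolFun_eq_zero (hσ : IsPairing σ) (hm : ¬ PairingMPartite m d σ) :
    symbolFun m d σ = 0 := by
  obtain ⟨i, hlt, hi⟩ : ∃ i, i < σ i ∧ intervalIdx m d (σ i) = intervalIdx m d i := by
    simp only [PairingMPartite, not_forall, not_not] at hm
    obtain ⟨i, hi⟩ := hm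
    rcases lt_or_gt_of_ne (hσ.2 i) with hlt | hlt
    · exact ⟨σ i, by rwa [hσ.apply_apply], by rw [hσ.apply_apply, hi]⟩
    · exact ⟨i, hlt, hi⟩
  ext y
  exact Finset.prod_eq_zero (Finset.mem_filter.2 ⟨Finset.mem_univ i, hlt⟩)
    (by rw [hi, bracket_self])

theorem symbol_mem_span_noncrossing_general (hσ : IsPairing σ) :
    symbolFun m d σ ∈ Submodule.span ℕ
      {f : (Fin m → Fin 2 → ℂ) → ℂ |
        ∃ τ : Perm (Fin (m * d)),
          IsPairing τ ∧ PairingMPartite m d τ ∧ PairingNoncrossing τ ∧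
            f = symbolFun m d τ} := by
  rw [symbolFun_eq_pairProd]
  refine Submodule.span_le.2 ?_ <|
    hσ.pairProd_mem_span_noncrossing fun _ _ _ _ _ _ _ ↦ intervalBracket_pluecker _ _ _ _
  rintro _ ⟨τ, ⟨hτ, hnc⟩, rfl⟩
  rw [← symbolFun_eq_pairProd]
  by_cases hm : PairingMPartite m d τ
  · exact Submodule.subset_span ⟨τ, hτ, hm, hnc, rfl⟩
  · rw [hτ.symbolFun_eq_zero hm]
    exact zero_mem _

end Symbol

/-- **Spanning by noncrossing symbols.** For every `m`-partite pair partition `π` of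
`{1, ..., md}`, the symbol `ω̃_π` lies in the linear span of the symbols `ω̃_σ` of the
`m`-partite *noncrossing* pair partitions of `{1, ..., md}`. -/
theorem symbol_mem_span_noncrossing (m d : ℕ) (hd : 1 ≤ d)
    (σ : Equiv.Perm (Fin (m * d))) (hσ : IsPairing σ ∧ PairingMPartite m d σ) :
    symbolFun m d σ ∈ Submodule.span ℂ
      {f : (Fin m → Fin 2 → ℂ) → ℂ |
        ∃ τ : Equiv.Perm (Fin (m * d)),
          IsPairing τ ∧ PairingMPartite m d τ ∧ PairingNoncrossing τ ∧
            f = symbolFun m d τ} :=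
  Submodule.span_subset_span ℕ ℂ _ (symbol_mem_span_noncrossing_general hσ.1)
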